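/- arXiv:1512.06244 — 3 statements merged into one kernel-verified Lean document; each statement's English description precedes it below -/
import Mathlib

section
/- Exponential asymptotic consensus is achieved for the consensus dynamics x'(t) = -L(t)x(t) if and only if there exist constants δ > 0 and T > 0 such that the time-varying graph {G_t} is jointly (δ,T)-connected. -/
/-!
**Joint connectivity gives consensus.** Subtracting the (conserved) average, let `x` be a
trajectory with mean zero and energy `V = ∑ x_i²`. By symmetry of the weights,
`V' = -∑_{i,j} a_ij (x_i - x_j)²` almost everywhere (`Sol.energy`). Let `D` be the energy
dissipated over a window `[s, s + T]`. By Cauchy–Schwarz no node moves by more than a multiple of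
`√D` during the window (`Sol.drift`), so along an edge with `∫ a_ij ≥ δ` the gap
`|x_i(s) - x_j(s)|` is also at most a multiple of `√D` (`Sol.edge_gap`). Connectedness spreads this
to all pairs, whence `V(s) ≤ C (V(s) - V(s + T))` with a constant `C` independent of `s`
(`Sol.window`), i.e. `V` contracts by a fixed factor on each window.

**Consensus gives joint connectivity.** Choose `T` large and `δ` small. If the joint graph on
`[s, s + T]` were disconnected, some proper nonempty set `S` of nodes would have only edges of
total weight less than `δ` leaving it. For the trajectory starting at time `s` from the indicator
of `S`, the mass `∑_{i ∈ S} x_i` changes only through these edges (`Sol.sum_sub`), hence stays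
close to `#S`, while consensus forces it close to `(#S)² / N`; these differ by at least `1 / 2`.
This needs a trajectory with prescribed initial value (`exists_sol`). The coefficients are only
measurable in time, so it is obtained by a fixed-point argument on the integral equation, global
in time thanks to an exponentially weighted norm.
-/

open MeasureTheory Finset Matrix

/-- The time-varying graph Laplacian built from the weight functions `a`:
`L(t)_{ij} = -a_{ij}(t)` for `i ≠ j` and `L(t)_{ii} = ∑_{j ≠ i} a_{ij}(t)`. -/
noncomputable def lap {N : ℕ} (a : Fin N → Fin N → ℝ → ℝ) (t : ℝ) :
    Matrix (Fin N) (Fin N) ℝ :=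
  Matrix.of fun i j =>
    if i = j then ∑ k ∈ Finset.univ.erase i, a i k t else -(a i j t)

/-- The time-varying graph is jointly `(δ,T)`-connected: for every `s ≥ 0`, the
edges `{i,j}` with `∫_s^{s+T} a_{ij}(t) dt ≥ δ` form a connected graph. -/
def JointlyConnected {N : ℕ} (a : Fin N → Fin N → ℝ → ℝ) (δ T : ℝ) : Prop :=
  ∀ s : ℝ, 0 ≤ s →
    (SimpleGraph.fromRel fun i j : Fin N => δ ≤ ∫ t in s..s + T, a i j t).Connected

/-- A (locally absolutely continuous) solution of `x'(t) = -L(t) x(t)` on `[t₀,∞)`,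
expressed in the equivalent integral form. -/
def IsSolution {N : ℕ} (a : Fin N → Fin N → ℝ → ℝ) (t₀ : ℝ)
    (x : ℝ → Fin N → ℝ) : Prop :=
  ContinuousOn x (Set.Ici t₀) ∧
    ∀ t, t₀ ≤ t → x t = x t₀ + ∫ u in t₀..t, (-(lap a u)).mulVec (x u)

/-- The average of the entries of a vector. -/
noncomputable def xave {N : ℕ} (v : Fin N → ℝ) : ℝ := (∑ i, v i) / N

/-- The Euclidean norm of a vector in `ℝ^N`. -/
noncomputable def enorm' {N : ℕ} (v : Fin N → ℝ) : ℝ := Real.sqrt (∑ i, v i ^ 2)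

/-- Exponential asymptotic consensus for the dynamics `x'(t) = -L(t)x(t)`. -/
def ExpConsensus {N : ℕ} (a : Fin N → Fin N → ℝ → ℝ) : Prop :=
  ∃ α > (0 : ℝ), ∃ β > (0 : ℝ), ∀ t₀ : ℝ, 0 ≤ t₀ → ∀ x : ℝ → Fin N → ℝ,
    IsSolution a t₀ x → ∀ i, ∀ t, t₀ ≤ t →
      |x t i - xave (x t₀)| ≤
        β * enorm' (fun j => x t₀ j - xave (x t₀)) * Real.exp (-α * (t - t₀))

/-! ### Integrals along trajectories -/

/-- The right-hand side of the consensus dynamics, `∑_j a_ij(u) (v_j - v_i)`. -/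
noncomputable def flow {N : ℕ} (a : Fin N → Fin N → ℝ → ℝ) (u : ℝ) (v : Fin N → ℝ) :
    Fin N → ℝ := fun i => ∑ j, a i j u * (v j - v i)

/-- The standing assumptions on the weight functions. -/
structure Weights {N : ℕ} (a : Fin N → Fin N → ℝ → ℝ) (A : ℝ) : Prop where
  symm : ∀ i j t, a i j t = a j i t
  nonneg : ∀ i j (t : ℝ), 0 ≤ t → 0 ≤ a i j t
  meas : ∀ i j, Measurable (a i j)
  pos : 0 < A
  bd : ∀ i j, ∀ᵐ t ∂(volume : Measure ℝ), |a i j t| ≤ A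

/-- Trajectories written coordinatewise, with the irrelevant values before `t₀` chosen so that
the function is continuous on the whole line. -/
structure Sol {N : ℕ} (a : Fin N → Fin N → ℝ → ℝ) (t₀ : ℝ) (x : ℝ → Fin N → ℝ) : Prop where
  cont : Continuous x
  eq : ∀ i t, t₀ ≤ t → x t i = x t₀ i + ∫ u in t₀..t, flow a u (x u) i

lemma neg_lap_mulVec {N : ℕ} (a : Fin N → Fin N → ℝ → ℝ) (u : ℝ) (v : Fin N → ℝ) :
    (-(lap a u)).mulVec v = flow a u v := by
  funext i
  simp only [Matrix.mulVec, dotProduct, flow, lap, Matrix.neg_apply, Matrix.of_apply]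
  rw [← Finset.add_sum_erase _ _ (Finset.mem_univ i),
    ← Finset.add_sum_erase (s := univ) (fun j => a i j u * (v j - v i)) (Finset.mem_univ i)]
  simp only [if_true, sub_self, mul_zero, zero_add, neg_mul, Finset.sum_mul]
  rw [← Finset.sum_neg_distrib, ← Finset.sum_add_distrib]
  refine Finset.sum_congr rfl fun j hj => ?_
  rw [if_neg (Finset.ne_of_mem_erase hj).symm]
  ring

lemma intervalIntegrable_finset_sum {ι : Type*} [Fintype ι] {f : ι → ℝ → ℝ} {s t : ℝ}
    (hf : ∀ i, IntervalIntegrable (f i) volume s t) :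
    IntervalIntegrable (fun u => ∑ i, f i u) volume s t := by
  simp only [intervalIntegrable_iff] at hf ⊢
  exact integrable_finsetSum _ fun i _ => hf i

namespace Weights

variable {N : ℕ} {a : Fin N → Fin N → ℝ → ℝ} {A : ℝ}

lemma intervalIntegrable (h : Weights a A) (i j : Fin N) (s t : ℝ) :
    IntervalIntegrable (a i j) volume s t := by
  refine (intervalIntegrable_const (c := A)).mono_fun' (h.meas i j).aestronglyMeasurable ?_
  exact ae_restrict_of_ae (by simpa using h.bd i j)

lemma intervalIntegrable_mul (h : Weights a A) (i j : Fin N) (s t : ℝ) {c : ℝ → ℝ}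
    (hc : Continuous c) : IntervalIntegrable (fun u => a i j u * c u) volume s t :=
  (h.intervalIntegrable i j s t).mul_continuousOn hc.continuousOn

lemma intervalIntegrable_flow (h : Weights a A) {x : ℝ → Fin N → ℝ} (hx : Continuous x)
    (i : Fin N) (s t : ℝ) : IntervalIntegrable (fun u => flow a u (x u) i) volume s t := by
  unfold flow
  exact intervalIntegrable_finset_sum fun j => h.intervalIntegrable_mul i j s t (by fun_prop)

lemma intervalIntegrable_flow_vec (h : Weights a A) {x : ℝ → Fin N → ℝ} (hx : Continuous x)
    (s t : ℝ) : IntervalIntegrable (fun u => flow a u (x u)) volume s t := by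
  rw [intervalIntegrable_iff]
  exact Integrable.of_eval fun i => intervalIntegrable_iff.1 (h.intervalIntegrable_flow hx i s t)

/-- The integrand is the rate at which the energy `∑ x_i²` of a trajectory is dissipated. -/
lemma intervalIntegrable_diss (h : Weights a A) {x : ℝ → Fin N → ℝ} (hx : Continuous x)
    (s t : ℝ) : IntervalIntegrable (fun u => ∑ i, ∑ j, a i j u * (x u i - x u j) ^ 2)
      volume s t := by
  exact intervalIntegrable_finset_sum fun i => intervalIntegrable_finset_sum fun j =>
    h.intervalIntegrable_mul i j s t (by fun_prop)

lemma ae_bound (h : Weights a A) : ∀ᵐ t ∂(volume : Measure ℝ), ∀ i j, |a i j t| ≤ A := by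
  simp only [ae_all_iff]
  exact h.bd

end Weights

lemma intervalIntegral_eval {N : ℕ} {f : ℝ → Fin N → ℝ} {s t : ℝ}
    (hf : IntervalIntegrable f volume s t) (i : Fin N) :
    (∫ u in s..t, f u) i = ∫ u in s..t, f u i :=
  ((ContinuousLinearMap.proj (R := ℝ) (φ := fun _ : Fin N => ℝ) i).intervalIntegral_comp_comm
    hf).symm

lemma IsSolution.exists_sol {N : ℕ} {a : Fin N → Fin N → ℝ → ℝ} {A : ℝ} (h : Weights a A)
    {t₀ : ℝ} {x : ℝ → Fin N → ℝ} (hx : IsSolution a t₀ x) :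
    ∃ y, Sol a t₀ y ∧ ∀ t, t₀ ≤ t → y t = x t := by
  have hc : Continuous fun t => x (max t t₀) := by
    refine hx.1.comp_continuous (by fun_prop) fun t => ?_
    simp
  refine ⟨fun t => x (max t t₀), ⟨hc, fun i t ht => ?_⟩, fun t ht => by simp [max_eq_left ht]⟩
  rw [← intervalIntegral_eval (h.intervalIntegrable_flow_vec hc t₀ t)]
  simp only [max_eq_left ht, max_self]
  rw [hx.2 t ht, Pi.add_apply]
  refine congrArg _ (congrFun ?_ i)
  refine intervalIntegral.integral_congr fun u hu => ?_
  rw [Set.uIcc_of_le ht] at hu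
  simp only [neg_lap_mulVec, max_eq_left hu.1]

lemma Sol.isSolution {N : ℕ} {a : Fin N → Fin N → ℝ → ℝ} {A : ℝ} (h : Weights a A)
    {t₀ : ℝ} {x : ℝ → Fin N → ℝ} (hx : Sol a t₀ x) : IsSolution a t₀ x := by
  refine ⟨hx.cont.continuousOn, fun t ht => ?_⟩
  simp only [neg_lap_mulVec]
  funext i
  rw [Pi.add_apply, intervalIntegral_eval (h.intervalIntegrable_flow_vec hx.cont t₀ t)]
  exact hx.eq i t ht

/-- Fundamental theorem of calculus for the square of a primitive of an integrable function. -/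
lemma sq_primitive_sub {g y : ℝ → ℝ} {s t : ℝ} (hst : s ≤ t)
    (hg : IntervalIntegrable g volume s t)
    (hy : ∀ u, s ≤ u → y u = y s + ∫ v in s..u, g v) :
    y t ^ 2 - y s ^ 2 = ∫ u in s..t, 2 * (y u * g u) := by
  set Y : ℝ → ℝ := fun u => y s + ∫ v in s..u, g v with hY
  have hAC : AbsolutelyContinuousOnInterval Y s t :=
    (LipschitzWith.const (y s)).lipschitzOnWith.absolutelyContinuousOnInterval.fun_add
      (hg.absolutelyContinuousOnInterval_intervalIntegral (by simp))
  have hd : ∀ᵐ u, u ∈ Set.uIoc s t → deriv Y u = g u := by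
    filter_upwards [hg.ae_hasDerivAt_integral] with u hu hus
    exact ((hu (Set.uIoc_subset_uIcc hus) s (by simp)).const_add (y s)).deriv
  have key := hAC.integral_mul_deriv_eq_deriv_mul hAC
  have e1 : ∫ u in s..t, Y u * deriv Y u = ∫ u in s..t, y u * g u := by
    refine intervalIntegral.integral_congr_ae ?_
    filter_upwards [hd] with u hu hus
    rw [hu hus]
    rw [Set.uIoc_of_le hst] at hus
    rw [hy u hus.1.le]
  have e2 : ∫ u in s..t, deriv Y u * Y u = ∫ u in s..t, y u * g u := by
    rw [← e1]
    simp only [mul_comm]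
  have e3 : Y t = y t := (hy t hst).symm
  have e4 : Y s = y s := by simp [hY]
  rw [e1, e2, e3, e4] at key
  rw [intervalIntegral.integral_const_mul]
  linarith

lemma sq_integral_le {g : ℝ → ℝ} {s t : ℝ} (hst : s ≤ t)
    (hg : IntervalIntegrable g volume s t)
    (hg2 : IntervalIntegrable (fun u => g u ^ 2) volume s t) :
    (∫ u in s..t, g u) ^ 2 ≤ (t - s) * ∫ u in s..t, g u ^ 2 := by
  rcases hst.eq_or_lt with rfl | hlt
  · simp
  set I := ∫ u in s..t, g u with hI
  have hpos : 0 < t - s := sub_pos.2 hlt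
  -- the variance of `g` about its mean `I / (t - s)` is nonnegative
  have h0 : 0 ≤ ∫ u in s..t, (g u - I / (t - s)) ^ 2 :=
    intervalIntegral.integral_nonneg hst fun u _ => sq_nonneg _
  have e : ∫ u in s..t, (g u - I / (t - s)) ^ 2
      = (∫ u in s..t, g u ^ 2) - 2 * (I / (t - s)) * I + (t - s) * (I / (t - s)) ^ 2 := by
    have : (fun u => (g u - I / (t - s)) ^ 2)
        = fun u => (g u ^ 2 - 2 * (I / (t - s)) * g u) + (I / (t - s)) ^ 2 := by
      funext u; ring
    rw [this, intervalIntegral.integral_add (hg2.sub (hg.const_mul _)) intervalIntegrable_const,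
      intervalIntegral.integral_sub hg2 (hg.const_mul _), intervalIntegral.integral_const_mul,
      intervalIntegral.integral_const, smul_eq_mul]
  rw [e] at h0
  have : (∫ u in s..t, g u ^ 2) - 2 * (I / (t - s)) * I + (t - s) * (I / (t - s)) ^ 2
      = (∫ u in s..t, g u ^ 2) - I ^ 2 / (t - s) := by
    field_simp; ring
  rw [this, sub_nonneg, div_le_iff₀ hpos] at h0
  linarith

/-! ### Conservation of the average and dissipation of energy -/

namespace Sol

variable {N : ℕ} {a : Fin N → Fin N → ℝ → ℝ} {A t₀ : ℝ} {x : ℝ → Fin N → ℝ}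

lemma sub_const (hx : Sol a t₀ x) (c : ℝ) : Sol a t₀ fun t i => x t i - c := by
  refine ⟨?_, fun i t ht => ?_⟩
  · have := hx.cont
    fun_prop
  · simp only [flow, sub_sub_sub_cancel_right]
    rw [hx.eq i t ht]
    simp only [flow]
    ring

lemma restart (h : Weights a A) (hx : Sol a t₀ x) {s : ℝ} (hs : t₀ ≤ s) : Sol a s x := by
  refine ⟨hx.cont, fun i t ht => ?_⟩
  rw [hx.eq i t (hs.trans ht), hx.eq i s hs, add_assoc,
    intervalIntegral.integral_add_adjacent_intervals
      (h.intervalIntegrable_flow hx.cont i _ _) (h.intervalIntegrable_flow hx.cont i _ _)]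

lemma sum_flow (h : Weights a A) (S : Finset (Fin N)) (u : ℝ) (v : Fin N → ℝ) :
    ∑ i ∈ S, ∑ j ∈ S, a i j u * (v j - v i) = 0 := by
  have e : ∑ i ∈ S, ∑ j ∈ S, a i j u * (v j - v i)
      = -∑ i ∈ S, ∑ j ∈ S, a i j u * (v j - v i) := by
    conv_lhs => rw [Finset.sum_comm]
    rw [← Finset.sum_neg_distrib]
    refine Finset.sum_congr rfl fun i _ => ?_
    rw [← Finset.sum_neg_distrib]
    refine Finset.sum_congr rfl fun j _ => ?_
    rw [h.symm j i]
    ring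
  linarith

/-- The mass of a set `S` of nodes changes only through the edges leaving `S`. -/
lemma sum_sub (h : Weights a A) (hx : Sol a t₀ x) (S : Finset (Fin N)) {t : ℝ} (ht : t₀ ≤ t) :
    ∑ i ∈ S, x t i - ∑ i ∈ S, x t₀ i
      = ∑ i ∈ S, ∑ j ∈ Sᶜ, ∫ u in t₀..t, a i j u * (x u j - x u i) := by
  have hint : ∀ i j, IntervalIntegrable (fun u => a i j u * (x u j - x u i)) volume t₀ t :=
    fun i j => h.intervalIntegrable_mul i j _ _ (by have := hx.cont; fun_prop)
  have e : ∀ i, x t i - x t₀ i = ∑ j, ∫ u in t₀..t, a i j u * (x u j - x u i) := by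
    intro i
    rw [hx.eq i t ht, add_sub_cancel_left, ← intervalIntegral.integral_finsetSum
      fun j _ => hint i j]
    rfl
  have e0 : ∑ i ∈ S, ∑ j ∈ S, ∫ u in t₀..t, a i j u * (x u j - x u i) = 0 := by
    calc _ = ∫ u in t₀..t, ∑ i ∈ S, ∑ j ∈ S, a i j u * (x u j - x u i) := by
          rw [intervalIntegral.integral_finsetSum]
          · refine Finset.sum_congr rfl fun i _ => ?_
            rw [intervalIntegral.integral_finsetSum fun j _ => hint i j]
          · intro i _
            simp only [intervalIntegrable_iff] at hint ⊢
            exact integrable_finsetSum _ fun j _ => hint i j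
      _ = 0 := by simp [sum_flow h]
  rw [← Finset.sum_sub_distrib, Finset.sum_congr rfl fun i _ => e i]
  simp_rw [← Finset.sum_add_sum_compl S, Finset.sum_add_distrib]
  rw [e0, zero_add]

lemma sum_eq (h : Weights a A) (hx : Sol a t₀ x) {t : ℝ} (ht : t₀ ≤ t) :
    ∑ i, x t i = ∑ i, x t₀ i := by
  have := hx.sum_sub h univ ht
  simp at this
  linarith

lemma energy (h : Weights a A) (hx : Sol a t₀ x) {t : ℝ} (ht : t₀ ≤ t) :
    ∑ i, x t₀ i ^ 2 - ∑ i, x t i ^ 2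
      = ∫ u in t₀..t, ∑ i, ∑ j, a i j u * (x u i - x u j) ^ 2 := by
  have hxc := hx.cont
  have e : ∀ i, x t i ^ 2 - x t₀ i ^ 2 = ∫ u in t₀..t, 2 * (x u i * flow a u (x u) i) :=
    fun i => sq_primitive_sub (y := fun u => x u i) ht (h.intervalIntegrable_flow hx.cont i _ _)
      fun u hu => hx.eq i u hu
  have e2 : ∑ i, x t i ^ 2 - ∑ i, x t₀ i ^ 2
      = ∫ u in t₀..t, ∑ i, 2 * (x u i * flow a u (x u) i) := by
    rw [← Finset.sum_sub_distrib, Finset.sum_congr rfl fun i _ => e i,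
      intervalIntegral.integral_finsetSum]
    intro i _
    exact ((h.intervalIntegrable_flow hx.cont i _ _).continuousOn_mul
      (by fun_prop : Continuous fun u => x u i).continuousOn).const_mul 2
  have e3 : ∀ u, ∑ i, ∑ j, a i j u * (x u i - x u j) ^ 2
      = -∑ i, 2 * (x u i * flow a u (x u) i) := by
    intro u
    have hs : ∑ i, ∑ j, a i j u * (x u j - x u i) * x u i
        = ∑ i, ∑ j, a i j u * (x u i - x u j) * x u j := by
      rw [Finset.sum_comm]
      refine Finset.sum_congr rfl fun i _ => Finset.sum_congr rfl fun j _ => ?_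
      rw [h.symm j i]
    have hl : ∑ i, 2 * (x u i * flow a u (x u) i)
        = ∑ i, ∑ j, a i j u * (x u j - x u i) * x u i
          + ∑ i, ∑ j, a i j u * (x u i - x u j) * x u j := by
      rw [← hs, ← two_mul, Finset.mul_sum]
      refine Finset.sum_congr rfl fun i _ => ?_
      rw [flow, Finset.mul_sum]
      congr 1
      exact Finset.sum_congr rfl fun j _ => by ring
    rw [hl, ← Finset.sum_add_distrib, ← Finset.sum_neg_distrib]
    refine Finset.sum_congr rfl fun i _ => ?_
    rw [← Finset.sum_add_distrib, ← Finset.sum_neg_distrib]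
    exact Finset.sum_congr rfl fun j _ => by ring
  simp_rw [e3]
  rw [intervalIntegral.integral_neg, ← e2]
  ring

lemma diss_nonneg (h : Weights a A) {u : ℝ} (hu : 0 ≤ u) (v : Fin N → ℝ) :
    0 ≤ ∑ i, ∑ j, a i j u * (v i - v j) ^ 2 :=
  Finset.sum_nonneg fun i _ => Finset.sum_nonneg fun j _ =>
    mul_nonneg (h.nonneg i j u hu) (sq_nonneg _)

lemma sum_sq_anti (h : Weights a A) (h0 : 0 ≤ t₀) (hx : Sol a t₀ x) {t : ℝ} (ht : t₀ ≤ t) :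
    ∑ i, x t i ^ 2 ≤ ∑ i, x t₀ i ^ 2 := by
  have := hx.energy h ht
  have h2 : 0 ≤ ∫ u in t₀..t, ∑ i, ∑ j, a i j u * (x u i - x u j) ^ 2 :=
    intervalIntegral.integral_nonneg ht fun u hu => diss_nonneg h (h0.trans hu.1) _
  linarith

/-! ### Decay over one window of joint connectivity -/

/-- By Cauchy–Schwarz, the displacement of a node is controlled by the energy dissipated. -/
lemma drift (h : Weights a A) (h0 : 0 ≤ t₀) (hx : Sol a t₀ x) {T t : ℝ}
    (ht : t ∈ Set.Icc t₀ (t₀ + T)) (i : Fin N) :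
    (x t i - x t₀ i) ^ 2
      ≤ T * (N * A * ∫ u in t₀..t₀ + T, ∑ i, ∑ j, a i j u * (x u i - x u j) ^ 2) := by
  set d : ℝ → ℝ := fun u => ∑ i, ∑ j, a i j u * (x u i - x u j) ^ 2 with hd
  have hdint := h.intervalIntegrable_diss hx.cont
  have hpt : ∀ᵐ u ∂(volume : Measure ℝ), 0 ≤ u → flow a u (x u) i ^ 2 ≤ N * A * d u := by
    filter_upwards [h.ae_bound] with u hu hu0
    calc flow a u (x u) i ^ 2
        ≤ (Fintype.card (Fin N)) * ∑ j, (a i j u * (x u j - x u i)) ^ 2 := by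
          have := sq_sum_le_card_mul_sum_sq (s := univ) (f := fun j => a i j u * (x u j - x u i))
          simpa [flow] using this
      _ ≤ N * (A * ∑ j, a i j u * (x u i - x u j) ^ 2) := by
          rw [Fintype.card_fin]
          gcongr
          rw [Finset.mul_sum]
          refine Finset.sum_le_sum fun j _ => ?_
          have h1 := h.nonneg i j u hu0
          have h2 := (le_abs_self _).trans (hu i j)
          have h3 : 0 ≤ a i j u * (x u i - x u j) ^ 2 := by positivity
          nlinarith [mul_le_mul_of_nonneg_right h2 h3]
      _ ≤ N * A * d u := by
          rw [mul_assoc]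
          have := h.pos
          gcongr
          exact Finset.single_le_sum (f := fun i => ∑ j, a i j u * (x u i - x u j) ^ 2)
            (fun i _ => Finset.sum_nonneg fun j _ =>
              mul_nonneg (h.nonneg i j u hu0) (sq_nonneg _)) (Finset.mem_univ i)
  have hfl := h.intervalIntegrable_flow hx.cont i t₀ t
  have hsq : IntervalIntegrable (fun u => flow a u (x u) i ^ 2) volume t₀ t := by
    refine ((hdint t₀ t).const_mul (N * A)).mono_fun' 
      ((intervalIntegrable_iff.1 hfl).aestronglyMeasurable.pow 2) ?_
    rw [Filter.EventuallyLE, ae_restrict_iff' measurableSet_uIoc]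
    filter_upwards [hpt] with u hu hus
    rw [Set.uIoc_of_le ht.1] at hus
    rw [Real.norm_of_nonneg (sq_nonneg _)]
    exact hu (h0.trans hus.1.le)
  have hdpos : ∀ u, 0 ≤ u → 0 ≤ d u := fun u hu => diss_nonneg h hu _
  calc (x t i - x t₀ i) ^ 2 = (∫ u in t₀..t, flow a u (x u) i) ^ 2 := by
        rw [hx.eq i t ht.1, add_sub_cancel_left]
    _ ≤ (t - t₀) * ∫ u in t₀..t, flow a u (x u) i ^ 2 := sq_integral_le ht.1 hfl hsq
    _ ≤ (t - t₀) * ∫ u in t₀..t, N * A * d u := by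
        refine mul_le_mul_of_nonneg_left ?_ (sub_nonneg.2 ht.1)
        refine intervalIntegral.integral_mono_ae_restrict ht.1 hsq
          ((hdint t₀ t).const_mul (N * A)) ?_
        rw [Filter.EventuallyLE, ae_restrict_iff' measurableSet_Icc]
        filter_upwards [hpt] with u hu hus using hu (h0.trans hus.1)
    _ = (t - t₀) * (N * A * ∫ u in t₀..t, d u) := by
        rw [intervalIntegral.integral_const_mul]
    _ ≤ T * (N * A * ∫ u in t₀..t₀ + T, d u) := by
        have hle : ∫ u in t₀..t, d u ≤ ∫ u in t₀..t₀ + T, d u := by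
          rw [← intervalIntegral.integral_add_adjacent_intervals (hdint t₀ t)
            (hdint t (t₀ + T))]
          have := intervalIntegral.integral_nonneg (μ := volume) (f := d) ht.2
            fun u hu => hdpos u (h0.trans (ht.1.trans hu.1))
          linarith
        have hn : 0 ≤ ∫ u in t₀..t, d u :=
          intervalIntegral.integral_nonneg ht.1 fun u hu => hdpos u (h0.trans hu.1)
        have := h.pos
        have h2 : t - t₀ ≤ T := by linarith [ht.2]
        have h3 : 0 ≤ T := (sub_nonneg.2 ht.1).trans h2
        gcongr

/-- Across an edge of the joint graph the initial gap is controlled by the energy dissipated. -/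
lemma edge_gap (h : Weights a A) (h0 : 0 ≤ t₀) (hx : Sol a t₀ x) {T δ : ℝ} (hT : 0 < T)
    {i j : Fin N} (hij : δ ≤ ∫ u in t₀..t₀ + T, a i j u) :
    δ * (x t₀ i - x t₀ j) ^ 2 ≤ (3 + 6 * N * A ^ 2 * T ^ 2) *
      ∫ u in t₀..t₀ + T, ∑ i, ∑ j, a i j u * (x u i - x u j) ^ 2 := by
  have hdr := fun t ht => hx.drift h h0 (T := T) (t := t) ht
  set d : ℝ → ℝ := fun u => ∑ i, ∑ j, a i j u * (x u i - x u j) ^ 2 with hd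
  set D := ∫ u in t₀..t₀ + T, d u with hD
  have hle : t₀ ≤ t₀ + T := by linarith
  have hdint := h.intervalIntegrable_diss hx.cont t₀ (t₀ + T)
  have hA := h.pos
  have hD0 : 0 ≤ D := intervalIntegral.integral_nonneg hle fun u hu =>
    diss_nonneg h (h0.trans hu.1) _
  calc δ * (x t₀ i - x t₀ j) ^ 2
      ≤ (∫ u in t₀..t₀ + T, a i j u) * (x t₀ i - x t₀ j) ^ 2 := by gcongr
    _ = ∫ u in t₀..t₀ + T, a i j u * (x t₀ i - x t₀ j) ^ 2 := by
        rw [intervalIntegral.integral_mul_const]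
    _ ≤ ∫ u in t₀..t₀ + T, (3 * d u + A * (6 * (T * (N * A * D)))) := by
        refine intervalIntegral.integral_mono_ae_restrict hle
          ((h.intervalIntegrable i j _ _).mul_const _)
          ((hdint.const_mul 3).add intervalIntegrable_const) ?_
        rw [Filter.EventuallyLE, ae_restrict_iff' measurableSet_Icc]
        filter_upwards [h.ae_bound] with u hu hus
        have hu0 := h0.trans hus.1
        have h1 := h.nonneg i j u hu0
        have h2 := (le_abs_self _).trans (hu i j)
        have hi := hdr u hus i
        have hj := hdr u hus j
        have hz : a i j u * (x u i - x u j) ^ 2 ≤ d u := by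
          calc _ ≤ ∑ j, a i j u * (x u i - x u j) ^ 2 :=
                Finset.single_le_sum (f := fun j => a i j u * (x u i - x u j) ^ 2)
                  (fun j _ => mul_nonneg (h.nonneg i j u hu0) (sq_nonneg _)) (Finset.mem_univ j)
            _ ≤ d u := Finset.single_le_sum (f := fun i => ∑ j, a i j u * (x u i - x u j) ^ 2)
                  (fun i _ => Finset.sum_nonneg fun j _ =>
                    mul_nonneg (h.nonneg i j u hu0) (sq_nonneg _)) (Finset.mem_univ i)
        have h4 : (x t₀ i - x t₀ j) ^ 2
            ≤ 3 * (x u i - x u j) ^ 2 + 6 * (T * (N * A * D)) := by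
          nlinarith [sq_nonneg ((x u i - x u j) + (x u i - x t₀ i)),
            sq_nonneg ((x u i - x u j) - (x u j - x t₀ j)),
            sq_nonneg ((x u i - x t₀ i) + (x u j - x t₀ j))]
        have h5 : 0 ≤ 6 * (T * (N * A * D)) := by positivity
        nlinarith [mul_le_mul_of_nonneg_left h4 h1, mul_le_mul_of_nonneg_right h2 h5]
    _ = (3 + 6 * N * A ^ 2 * T ^ 2) * D := by
        rw [intervalIntegral.integral_add (hdint.const_mul 3) intervalIntegrable_const,
          intervalIntegral.integral_const_mul, intervalIntegral.integral_const, smul_eq_mul]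
        ring

/-- Along a path of the graph, gaps add up. -/
lemma walk_gap {G : SimpleGraph (Fin N)} {v : Fin N → ℝ} {r : ℝ}
    (hG : ∀ i j, G.Adj i j → |v i - v j| ≤ r) {i j : Fin N} (p : G.Walk i j) :
    |v i - v j| ≤ p.length * r := by
  induction p with
  | nil => simp
  | cons hadj p ih =>
    rename_i i k j
    have h1 := hG _ _ hadj
    have h2 := abs_sub_le (v i) (v k) (v j)
    rw [SimpleGraph.Walk.length_cons]
    push_cast
    linarith

lemma connected_gap {G : SimpleGraph (Fin N)} (hc : G.Connected) {v : Fin N → ℝ} {r : ℝ}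
    (hr : 0 ≤ r) (hG : ∀ i j, G.Adj i j → |v i - v j| ≤ r) (i j : Fin N) :
    |v i - v j| ≤ N * r := by
  obtain ⟨p, hp⟩ := (hc.preconnected i j).exists_isPath
  refine (walk_gap hG p).trans ?_
  have := hp.length_lt
  rw [Fintype.card_fin] at this
  gcongr

/-- For mean-zero initial data, the initial energy is at most a uniform multiple of the energy
dissipated over a window on which the joint graph is connected. -/
lemma window (h : Weights a A) (hN : 0 < N) (h0 : 0 ≤ t₀) (hx : Sol a t₀ x) {T δ : ℝ}
    (hT : 0 < T) (hδ : 0 < δ) (hJ : JointlyConnected a δ T) (hsum : ∑ i, x t₀ i = 0) :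
    ∑ i, x t₀ i ^ 2 ≤ (N ^ 3 * ((3 + 6 * N * A ^ 2 * T ^ 2) / δ)) *
      (∑ i, x t₀ i ^ 2 - ∑ i, x (t₀ + T) i ^ 2) := by
  have hle : t₀ ≤ t₀ + T := by linarith
  rw [hx.energy h hle]
  have hedge := fun i j => hx.edge_gap h h0 hT (δ := δ) (i := i) (j := j)
  set D := ∫ u in t₀..t₀ + T, ∑ i, ∑ j, a i j u * (x u i - x u j) ^ 2 with hD
  have hD0 : 0 ≤ D := intervalIntegral.integral_nonneg hle fun u hu =>
    diss_nonneg h (h0.trans hu.1) _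
  have hA := h.pos
  set R := (3 + 6 * N * A ^ 2 * T ^ 2) * D / δ with hR
  have hR0 : 0 ≤ R := by positivity
  have hbase : ∀ i j, (δ ≤ ∫ u in t₀..t₀ + T, a i j u) → |x t₀ i - x t₀ j| ≤ √R := by
    intro i j hij
    refine Real.abs_le_sqrt ?_
    rw [hR, le_div_iff₀ hδ, mul_comm]
    exact hedge i j hij
  have hgap : ∀ i j, |x t₀ i - x t₀ j| ≤ N * √R := by
    refine connected_gap (hJ t₀ h0) (Real.sqrt_nonneg _) fun i j hij => ?_
    rw [SimpleGraph.fromRel_adj] at hij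
    rcases hij.2 with h1 | h1
    · exact hbase i j h1
    · rw [abs_sub_comm]; exact hbase j i h1
  have hNpos : (0 : ℝ) < N := by exact_mod_cast hN
  have hi : ∀ i, |x t₀ i| ≤ N * √R := by
    intro i
    have e : (N : ℝ) * x t₀ i = ∑ j, (x t₀ i - x t₀ j) := by
      simp [Finset.sum_sub_distrib, hsum]
    have h1 : |(N : ℝ) * x t₀ i| ≤ ∑ _j : Fin N, N * √R := by
      rw [e]
      exact (Finset.abs_sum_le_sum_abs _ _).trans (Finset.sum_le_sum fun j _ => hgap i j)
    rw [abs_mul, abs_of_pos hNpos] at h1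
    simp only [sum_const, card_univ, Fintype.card_fin, nsmul_eq_mul] at h1
    exact le_of_mul_le_mul_left h1 hNpos
  calc ∑ i, x t₀ i ^ 2 ≤ ∑ _i : Fin N, (N * √R) ^ 2 :=
        Finset.sum_le_sum fun i _ => sq_le_sq' (abs_le.1 (hi i)).1 (abs_le.1 (hi i)).2
    _ = N ^ 3 * R := by
        simp only [sum_const, card_univ, Fintype.card_fin, nsmul_eq_mul, mul_pow,
          Real.sq_sqrt hR0]
        ring
    _ = _ := by rw [hR]; ring

end Sol

/-- Geometric decay along windows of length `T` gives exponential decay. -/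
lemma exp_decay {V : ℝ → ℝ} {t₀ T ρ : ℝ} (hT : 0 < T) (hρ0 : 0 < ρ) (hρ1 : ρ < 1)
    (hV0 : 0 ≤ V t₀)
    (hanti : ∀ s t, t₀ ≤ s → s ≤ t → V t ≤ V s) (hwin : ∀ s, t₀ ≤ s → V (s + T) ≤ ρ * V s)
    {t : ℝ} (ht : t₀ ≤ t) :
    V t ≤ Real.exp (-Real.log ρ) * V t₀ * Real.exp (Real.log ρ / T * (t - t₀)) := by
  have hn : ∀ n : ℕ, V (t₀ + n * T) ≤ ρ ^ n * V t₀ := by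
    intro n
    induction n with
    | zero => simp
    | succ n ih =>
      have h1 := hwin (t₀ + n * T) (by nlinarith [n.cast_nonneg (α := ℝ)])
      push_cast
      rw [show t₀ + ((n : ℝ) + 1) * T = t₀ + n * T + T by ring, pow_succ]
      nlinarith
  have hq : 0 ≤ (t - t₀) / T := div_nonneg (sub_nonneg.2 ht) hT.le
  set n := ⌊(t - t₀) / T⌋₊ with hn'
  have h1 : (n : ℝ) * T ≤ t - t₀ := (le_div_iff₀ hT).1 (Nat.floor_le hq)
  have h2 : (t - t₀) / T < n + 1 := Nat.lt_floor_add_one _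
  have hlog : Real.log ρ < 0 := Real.log_neg hρ0 hρ1
  calc V t ≤ V (t₀ + n * T) := hanti _ _ (by nlinarith [n.cast_nonneg (α := ℝ)]) (by linarith)
    _ ≤ ρ ^ n * V t₀ := hn n
    _ ≤ Real.exp (-Real.log ρ + Real.log ρ / T * (t - t₀)) * V t₀ := by
        refine mul_le_mul_of_nonneg_right ?_ hV0
        rw [← Real.exp_log hρ0, ← Real.exp_nat_mul, Real.exp_log hρ0]
        refine Real.exp_le_exp.2 ?_
        have : Real.log ρ / T * (t - t₀) = Real.log ρ * ((t - t₀) / T) := by ring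
        rw [this]
        nlinarith
    _ = _ := by rw [Real.exp_add]; ring

lemma expConsensus_of_jointlyConnected {N : ℕ} (hN : 0 < N) {a : Fin N → Fin N → ℝ → ℝ} {A : ℝ}
    (h : Weights a A) {δ T : ℝ} (hδ : 0 < δ) (hT : 0 < T) (hJ : JointlyConnected a δ T) :
    ExpConsensus a := by
  have hA := h.pos
  have hNpos : (0 : ℝ) < N := by exact_mod_cast hN
  set C : ℝ := N ^ 3 * ((3 + 6 * N * A ^ 2 * T ^ 2) / δ) with hC
  have hC0 : 0 < C := by positivity
  set ρ : ℝ := C / (C + 1) with hρ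
  have hρ0 : 0 < ρ := by positivity
  have hρ1 : ρ < 1 := by rw [hρ, div_lt_one (by linarith)]; linarith
  have hlog : Real.log ρ < 0 := Real.log_neg hρ0 hρ1
  refine ⟨-(Real.log ρ / T) / 2, ?_, Real.exp (-Real.log ρ / 2), Real.exp_pos _, ?_⟩
  · have := div_neg_of_neg_of_pos hlog hT
    linarith
  intro t₀ h0 x hx i t ht
  obtain ⟨z, hz, hzx⟩ := hx.exists_sol h
  rw [← hzx t ht, ← hzx t₀ le_rfl]
  set c := xave (z t₀) with hc
  set y : ℝ → Fin N → ℝ := fun t i => z t i - c with hy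
  have hys : Sol a t₀ y := hz.sub_const c
  have hsum0 : ∑ i, y t₀ i = 0 := by
    simp only [hy, Finset.sum_sub_distrib, hc, xave]
    simp only [sum_const, card_univ, Fintype.card_fin, nsmul_eq_mul]
    field_simp
    ring
  set V : ℝ → ℝ := fun t => ∑ i, y t i ^ 2 with hV
  have hVn : ∀ t, 0 ≤ V t := fun t => Finset.sum_nonneg fun i _ => sq_nonneg _
  have hdec := exp_decay (V := V) (t₀ := t₀) hT hρ0 hρ1 (hVn _)
    (fun s t hs hst => (hys.restart h hs).sum_sq_anti h (h0.trans hs) hst)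
    (fun s hs => by
      have hw := (hys.restart h hs).window h hN (h0.trans hs) hT hδ hJ
        ((hys.sum_eq h hs).trans hsum0)
      change V s ≤ C * (V s - V (s + T)) at hw
      rw [hρ, div_mul_eq_mul_div, le_div_iff₀ (by linarith)]
      have ha : V (s + T) ≤ V s :=
        (hys.restart h hs).sum_sq_anti h (h0.trans hs) (by linarith)
      nlinarith) ht
  change |y t i| ≤ _
  have e1 : enorm' (fun j => z t₀ j - c) = √(V t₀) := rfl
  rw [e1]
  refine abs_le_of_sq_le_sq ?_ (by positivity)
  calc y t i ^ 2 ≤ V t :=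
        Finset.single_le_sum (f := fun i => y t i ^ 2) (fun i _ => sq_nonneg _) (Finset.mem_univ i)
    _ ≤ _ := hdec
    _ = _ := by
        rw [mul_pow, mul_pow, Real.sq_sqrt (hVn _), ← Real.exp_nat_mul, ← Real.exp_nat_mul,
          show ((2 : ℕ) : ℝ) * (-Real.log ρ / 2) = -Real.log ρ by push_cast; ring,
          show ((2 : ℕ) : ℝ) * (-(-(Real.log ρ / T) / 2) * (t - t₀))
            = Real.log ρ / T * (t - t₀) by push_cast; ring]

/-! ### Existence of solutions -/

lemma flow_norm_le {N : ℕ} {a : Fin N → Fin N → ℝ → ℝ} {A u : ℝ} (hA : 0 ≤ A)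
    (hu : ∀ i j, |a i j u| ≤ A) (v : Fin N → ℝ) : ‖flow a u v‖ ≤ 2 * N * A * ‖v‖ := by
  refine (pi_norm_le_iff_of_nonneg (by positivity)).2 fun i => ?_
  calc ‖flow a u v i‖ ≤ ∑ j, ‖a i j u * (v j - v i)‖ := norm_sum_le _ _
    _ ≤ ∑ _j : Fin N, A * (‖v‖ + ‖v‖) := by
        refine Finset.sum_le_sum fun j _ => ?_
        rw [norm_mul]
        refine mul_le_mul (hu i j) ?_ (norm_nonneg _) hA
        exact (norm_sub_le _ _).trans (add_le_add (norm_le_pi_norm v j) (norm_le_pi_norm v i))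
    _ = _ := by
        simp only [sum_const, card_univ, Fintype.card_fin, nsmul_eq_mul]
        ring

lemma flow_smul {N : ℕ} (a : Fin N → Fin N → ℝ → ℝ) (u c : ℝ) (v : Fin N → ℝ) :
    flow a u (c • v) = c • flow a u v := by
  funext i
  simp only [flow, Pi.smul_apply, smul_eq_mul, Finset.mul_sum]
  exact Finset.sum_congr rfl fun j _ => by ring

lemma flow_sub {N : ℕ} (a : Fin N → Fin N → ℝ → ℝ) (u : ℝ) (v w : Fin N → ℝ) :
    flow a u (v - w) = flow a u v - flow a u w := by
  funext i
  simp only [flow, Pi.sub_apply, ← Finset.sum_sub_distrib]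
  exact Finset.sum_congr rfl fun j _ => by ring

/-- The Picard operator in the exponentially weighted unknown `y(t) = e^{-k(t-s)} x(t)`, without
the initial value; arguments below `s` are moved to `s`. -/
noncomputable def picard {N : ℕ} (a : Fin N → Fin N → ℝ → ℝ) (s k : ℝ) (y : ℝ → Fin N → ℝ)
    (t : ℝ) : Fin N → ℝ :=
  Real.exp (-k * (max t s - s)) • ∫ u in s..max t s, flow a u (Real.exp (k * (u - s)) • y u)

lemma picard_continuous {N : ℕ} {a : Fin N → Fin N → ℝ → ℝ} {A : ℝ} (h : Weights a A)
    (s k : ℝ) {y : ℝ → Fin N → ℝ} (hy : Continuous y) : Continuous (picard a s k y) := by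
  have h1 : Continuous fun b => ∫ u in s..b, flow a u (Real.exp (k * (u - s)) • y u) :=
    intervalIntegral.continuous_primitive
      (fun b c => h.intervalIntegrable_flow_vec (by fun_prop) b c) s
  unfold picard
  exact (by fun_prop : Continuous fun t => Real.exp (-k * (max t s - s))).smul
    (h1.comp (by fun_prop : Continuous fun t : ℝ => max t s))

lemma picard_norm_le {N : ℕ} {a : Fin N → Fin N → ℝ → ℝ} {A : ℝ} (h : Weights a A)
    (s : ℝ) {k B : ℝ} (hk : 0 < k) (hkA : 2 * (2 * N * A) ≤ k) {y : ℝ → Fin N → ℝ}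
    (hB : ∀ t, ‖y t‖ ≤ B) (t : ℝ) : ‖picard a s k y t‖ ≤ B / 2 := by
  have hA := h.pos
  have hB0 : 0 ≤ B := (norm_nonneg _).trans (hB 0)
  have hst : s ≤ max t s := le_max_right _ _
  set m := max t s with hm
  have hint : ∫ u in s..m, B * (k / 2) * Real.exp (k * (u - s))
      = B / 2 * (Real.exp (k * (m - s)) - 1) := by
    have hder : ∀ u ∈ Set.uIcc s m, HasDerivAt (fun u => B / 2 * Real.exp (k * (u - s)))
        (B * (k / 2) * Real.exp (k * (u - s))) u := by
      intro u _
      have := ((((hasDerivAt_id' u).sub_const s).const_mul k).exp).const_mul (B / 2)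
      refine this.congr_deriv ?_
      ring
    rw [intervalIntegral.integral_eq_sub_of_hasDerivAt hder
      (Continuous.intervalIntegrable (by fun_prop) _ _)]
    simp
    ring
  have hle : ‖∫ u in s..m, flow a u (Real.exp (k * (u - s)) • y u)‖
      ≤ B / 2 * (Real.exp (k * (m - s)) - 1) := by
    rw [← hint]
    refine intervalIntegral.norm_integral_le_of_norm_le hst ?_
      (Continuous.intervalIntegrable (by fun_prop) _ _)
    filter_upwards [h.ae_bound] with u hu _
    refine (flow_norm_le hA.le hu _).trans ?_
    rw [norm_smul, Real.norm_of_nonneg (Real.exp_pos _).le]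
    have he := Real.exp_pos (k * (u - s))
    calc 2 * N * A * (Real.exp (k * (u - s)) * ‖y u‖)
        ≤ (k / 2) * (Real.exp (k * (u - s)) * B) := by
          gcongr
          · linarith
          · exact hB u
      _ = _ := by ring
  rw [picard, norm_smul, Real.norm_of_nonneg (Real.exp_pos _).le]
  calc Real.exp (-k * (m - s)) * _
      ≤ Real.exp (-k * (m - s)) * (B / 2 * (Real.exp (k * (m - s)) - 1)) := by gcongr
    _ = B / 2 * (1 - Real.exp (-k * (m - s))) := by
        have : Real.exp (-k * (m - s)) * Real.exp (k * (m - s)) = 1 := by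
          rw [← Real.exp_add]; simp
        linear_combination (B / 2) * this
    _ ≤ B / 2 := by
        have := Real.exp_pos (-k * (m - s))
        nlinarith

lemma picard_sub {N : ℕ} {a : Fin N → Fin N → ℝ → ℝ} {A : ℝ} (h : Weights a A)
    (s k : ℝ) {y z : ℝ → Fin N → ℝ} (hy : Continuous y) (hz : Continuous z) (t : ℝ) :
    picard a s k (fun t => y t - z t) t = picard a s k y t - picard a s k z t := by
  unfold picard
  rw [← smul_sub, ← intervalIntegral.integral_sub
    (h.intervalIntegrable_flow_vec (by fun_prop) _ _)
    (h.intervalIntegrable_flow_vec (by fun_prop) _ _)]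
  simp only [smul_sub, flow_sub]

/-- Solutions exist for every initial value: since the coefficients are merely measurable, this
is obtained from the contraction principle for `picard` on bounded continuous functions. -/
lemma exists_sol {N : ℕ} {a : Fin N → Fin N → ℝ → ℝ} {A : ℝ} (h : Weights a A)
    (s : ℝ) (v : Fin N → ℝ) : ∃ x, Sol a s x ∧ x s = v := by
  have hA := h.pos
  obtain ⟨k, hk, hkA⟩ : ∃ k : ℝ, 0 < k ∧ 2 * (2 * N * A) ≤ k :=
    ⟨2 * (2 * N * A) + 1, by positivity, by linarith⟩
  let E := BoundedContinuousFunction ℝ (Fin N → ℝ)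
  have hexp : ∀ t, Real.exp (-k * (max t s - s)) ≤ 1 := by
    intro t
    rw [Real.exp_le_one_iff]
    have := le_max_right t s
    nlinarith
  let F : E → E := fun y => BoundedContinuousFunction.ofNormedAddCommGroup
    (fun t => Real.exp (-k * (max t s - s)) • v + picard a s k y t)
    ((by fun_prop : Continuous fun t => Real.exp (-k * (max t s - s)) • v).add
      (picard_continuous h s k y.continuous))
    (‖v‖ + ‖y‖ / 2) (fun t => by
      refine (norm_add_le _ _).trans (add_le_add ?_
        (picard_norm_le h s hk hkA y.norm_coe_le_norm t))
      rw [norm_smul, Real.norm_of_nonneg (Real.exp_pos _).le]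
      exact mul_le_of_le_one_left (norm_nonneg _) (hexp t))
  have hF : ContractingWith (1 / 2) F := by
    refine ⟨by rw [← NNReal.coe_lt_coe]; norm_num, LipschitzWith.of_dist_le_mul fun y z => ?_⟩
    rw [BoundedContinuousFunction.dist_le (by positivity)]
    intro t
    have e : F y t - F z t = picard a s k (fun t => y t - z t) t := by
      rw [picard_sub h s k y.continuous z.continuous]
      exact add_sub_add_left_eq_sub _ _ _
    rw [dist_eq_norm, e]
    refine (picard_norm_le h s hk hkA (B := dist y z) (fun u => ?_) t).trans_eq ?_
    · rw [← dist_eq_norm]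
      exact BoundedContinuousFunction.dist_coe_le_dist u
    · push_cast; ring
  set y := ContractingWith.fixedPoint F hF with hy
  have hfix : ∀ t, y t = Real.exp (-k * (max t s - s)) • v + picard a s k y t := by
    intro t
    have : F y = y := hF.fixedPoint_isFixedPt
    conv_lhs => rw [← this]
    rfl
  have hx : ∀ t, s ≤ t → Real.exp (k * (t - s)) • y t
      = v + ∫ u in s..t, flow a u (Real.exp (k * (u - s)) • y u) := by
    intro t ht
    rw [hfix t, picard, max_eq_left ht, ← smul_add, smul_smul, ← Real.exp_add]
    simp
  have hc : Continuous fun t => Real.exp (k * (t - s)) • y t := by fun_prop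
  have hs : Real.exp (k * (s - s)) • y s = v := by simpa using hx s le_rfl
  refine ⟨fun t => Real.exp (k * (t - s)) • y t, ⟨hc, fun i t ht => ?_⟩, hs⟩
  have := congrFun (hx t ht) i
  rw [Pi.add_apply, intervalIntegral_eval (h.intervalIntegrable_flow_vec hc _ _)] at this
  simp only [hs]
  exact this

/-! ### Necessity of joint connectivity -/

/-- A disconnected graph has a nonempty proper vertex set without outgoing edges. -/
lemma exists_cut {N : ℕ} (hN : 0 < N) {G : SimpleGraph (Fin N)} (hG : ¬ G.Connected) :
    ∃ S : Finset (Fin N), S.Nonempty ∧ Sᶜ.Nonempty ∧ ∀ i ∈ S, ∀ j ∈ Sᶜ, ¬ G.Adj i j := by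
  classical
  have : ¬ G.Preconnected := fun hp => hG ((SimpleGraph.connected_iff G).2 ⟨hp, ⟨⟨0, hN⟩⟩⟩)
  simp only [SimpleGraph.Preconnected, not_forall] at this
  obtain ⟨u, v, huv⟩ := this
  refine ⟨univ.filter fun w => G.Reachable u w, ⟨u, by simp⟩, ⟨v, by simpa using huv⟩, ?_⟩
  intro i hi j hj hadj
  simp only [Finset.mem_filter, Finset.mem_univ, true_and, Finset.mem_compl] at hi hj
  exact hj (hi.trans hadj.reachable)

lemma jointlyConnected_of_expConsensus {N : ℕ} (hN : 2 ≤ N) {a : Fin N → Fin N → ℝ → ℝ} {A : ℝ}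
    (h : Weights a A) (hE : ExpConsensus a) :
    ∃ δ > (0 : ℝ), ∃ T > (0 : ℝ), JointlyConnected a δ T := by
  classical
  obtain ⟨α, hα, β, hβ, hcons⟩ := hE
  have hN2 : (2 : ℝ) ≤ N := by exact_mod_cast hN
  have hNpos : (0 : ℝ) < N := by linarith
  -- a time after which consensus is reached up to a total error of `1 / 8`
  obtain ⟨T, hT, hTs⟩ : ∃ T : ℝ, 0 < T ∧ N ^ 2 * β * Real.exp (-α * T) ≤ 1 / 8 := by
    have hlim : Filter.Tendsto (fun T : ℝ => N ^ 2 * β * Real.exp (-α * T)) Filter.atTop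
        (nhds (N ^ 2 * β * 0)) := by
      refine Filter.Tendsto.const_mul _ (Real.tendsto_exp_atBot.comp ?_)
      exact Filter.tendsto_id.const_mul_atTop_of_neg (by linarith)
    rw [mul_zero] at hlim
    obtain ⟨T, hT1, hT2⟩ := ((hlim.eventually_le_const (by norm_num : (0 : ℝ) < 1 / 8)).and
      (Filter.eventually_gt_atTop 0)).exists
    exact ⟨T, hT2, hT1⟩
  refine ⟨1 / (16 * N ^ 3), by positivity, T, hT, ?_⟩
  intro s hs
  by_contra hG
  obtain ⟨S, hS, hSc, hcut⟩ := exists_cut (by omega) hG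
  have hle : s ≤ s + T := by linarith
  obtain ⟨x, hx, hxs⟩ := exists_sol h s (fun i => if i ∈ S then 1 else 0)
  have hxs' : ∀ i, x s i = if i ∈ S then 1 else 0 := fun i => congrFun hxs i
  -- coordinates stay bounded by `N` because the energy starts at `#S ≤ N`
  have hV0 : ∑ i, x s i ^ 2 ≤ (N : ℝ) := by
    calc ∑ i, x s i ^ 2 ≤ ∑ _i : Fin N, (1 : ℝ) := by
          refine Finset.sum_le_sum fun i _ => ?_
          rw [hxs']
          split_ifs <;> norm_num
      _ = N := by simp
  have hb : ∀ t, s ≤ t → ∀ i, |x t i| ≤ N := by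
    intro t ht i
    refine abs_le_of_sq_le_sq ?_ hNpos.le
    have h1 := hx.sum_sq_anti h hs ht
    have h2 : x t i ^ 2 ≤ ∑ i, x t i ^ 2 :=
      Finset.single_le_sum (f := fun i => x t i ^ 2) (fun i _ => sq_nonneg _) (Finset.mem_univ i)
    nlinarith
  have hcross : ∀ i ∈ S, ∀ j ∈ Sᶜ,
      |∫ u in s..s + T, a i j u * (x u j - x u i)| ≤ 1 / (8 * N ^ 2) := by
    intro i hi j hj
    have hne : i ≠ j := by
      rintro rfl
      exact (Finset.mem_compl.1 hj) hi
    have hlt : ∫ u in s..s + T, a i j u ≤ 1 / (16 * N ^ 3) := by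
      by_contra hcon
      refine hcut i hi j hj ?_
      rw [SimpleGraph.fromRel_adj]
      exact ⟨hne, Or.inl (not_le.1 hcon).le⟩
    calc |∫ u in s..s + T, a i j u * (x u j - x u i)|
        ≤ ∫ u in s..s + T, a i j u * (2 * N) := by
          rw [← Real.norm_eq_abs]
          refine intervalIntegral.norm_integral_le_of_norm_le hle ?_
            ((h.intervalIntegrable i j _ _).mul_const _)
          refine Filter.Eventually.of_forall fun u hu => ?_
          have h1 := h.nonneg i j u (hs.trans hu.1.le)
          rw [norm_mul, Real.norm_of_nonneg h1, Real.norm_eq_abs]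
          refine mul_le_mul_of_nonneg_left ?_ h1
          have h2 := hb u hu.1.le i
          have h3 := hb u hu.1.le j
          have h4 := abs_sub (x u j) (x u i)
          linarith
      _ = (∫ u in s..s + T, a i j u) * (2 * N) := by rw [intervalIntegral.integral_mul_const]
      _ ≤ 1 / (16 * N ^ 3) * (2 * N) := by gcongr
      _ = 1 / (8 * N ^ 2) := by field_simp; norm_num
  set k : ℝ := (S.card : ℝ) with hk
  have hcard : (S.card : ℝ) + (Sᶜ.card : ℝ) = N := by
    have := Finset.card_add_card_compl S
    rw [Fintype.card_fin] at this
    exact_mod_cast this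
  have hk1 : 1 ≤ k := by
    rw [hk]
    exact_mod_cast hS.card_pos
  have hk2 : (1 : ℝ) ≤ (Sᶜ.card : ℝ) := by exact_mod_cast hSc.card_pos
  have hkN : k ≤ N - 1 := by linarith
  -- the mass of `S` barely moves
  have hmass : |∑ i ∈ S, x (s + T) i - ∑ i ∈ S, x s i| ≤ 1 / 8 := by
    rw [hx.sum_sub h S hle]
    calc |∑ i ∈ S, ∑ j ∈ Sᶜ, ∫ u in s..s + T, a i j u * (x u j - x u i)|
        ≤ ∑ i ∈ S, ∑ j ∈ Sᶜ, 1 / (8 * (N : ℝ) ^ 2) := by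
          refine (Finset.abs_sum_le_sum_abs _ _).trans (Finset.sum_le_sum fun i hi => ?_)
          exact (Finset.abs_sum_le_sum_abs _ _).trans
            (Finset.sum_le_sum fun j hj => hcross i hi j hj)
      _ = k * (Sᶜ.card : ℝ) * (1 / (8 * (N : ℝ) ^ 2)) := by
          simp only [sum_const, nsmul_eq_mul]
          ring
      _ ≤ N * N * (1 / (8 * (N : ℝ) ^ 2)) := by
          refine mul_le_mul_of_nonneg_right ?_ (by positivity)
          exact mul_le_mul (by linarith) (by linarith) (by linarith) hNpos.le
      _ = 1 / 8 := by field_simp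
  have hM0 : ∑ i ∈ S, x s i = k := by
    rw [Finset.sum_congr rfl fun i hi => (hxs' i).trans (if_pos hi)]
    simp [hk]
  have hxave : xave (x s) = k / N := by
    simp only [xave, hxs']
    simp [hk]
  -- consensus forces the mass of `S` towards `k² / N`
  have hen : enorm' (fun j => x s j - xave (x s)) ≤ N := by
    refine (Real.sqrt_le_left hNpos.le).2 ?_
    calc ∑ i, (x s i - xave (x s)) ^ 2 ≤ ∑ _i : Fin N, (1 : ℝ) := by
          refine Finset.sum_le_sum fun i _ => ?_
          rw [hxave, hxs']
          have h1 : 0 ≤ k / N := by positivity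
          have h2 : k / N ≤ 1 := by rw [div_le_one hNpos]; linarith
          split_ifs <;> nlinarith
      _ = N := by simp
      _ ≤ (N : ℝ) ^ 2 := by nlinarith
  have hcon : |∑ i ∈ S, x (s + T) i - k * (k / N)| ≤ 1 / 8 := by
    have e : ∑ i ∈ S, x (s + T) i - k * (k / N) = ∑ i ∈ S, (x (s + T) i - xave (x s)) := by
      rw [Finset.sum_sub_distrib, hxave]
      simp [hk]
    rw [e]
    calc |∑ i ∈ S, (x (s + T) i - xave (x s))|
        ≤ ∑ i ∈ S, β * N * Real.exp (-α * T) := by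
          refine (Finset.abs_sum_le_sum_abs _ _).trans (Finset.sum_le_sum fun i _ => ?_)
          have h1 := hcons s hs x (hx.isSolution h) i (s + T) hle
          rw [add_sub_cancel_left] at h1
          refine h1.trans ?_
          gcongr
      _ = k * (β * N * Real.exp (-α * T)) := by simp [hk]
      _ ≤ N * (β * N * Real.exp (-α * T)) := by
          gcongr
          linarith
      _ = N ^ 2 * β * Real.exp (-α * T) := by ring
      _ ≤ 1 / 8 := hTs
  have hgap : 1 / 2 ≤ k - k * (k / N) := by
    have : k - k * (k / N) = k * (N - k) / N := by field_simp
    rw [this, le_div_iff₀ hNpos]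
    nlinarith
  rw [hM0] at hmass
  have h1 := (abs_le.1 hmass).1
  have h2 := (abs_le.1 hcon).2
  linarith

/-- **Theorem 1.** Exponential asymptotic consensus is achieved for the consensus
dynamics `x'(t) = -L(t)x(t)` if and only if there exist `δ > 0` and `T > 0` such that
the time-varying graph is jointly `(δ,T)`-connected. -/
theorem consensus_iff_jointly_connected
    {N : ℕ} (hN : 2 ≤ N) (a : Fin N → Fin N → ℝ → ℝ)
    (hsymm : ∀ i j t, a i j t = a j i t)
    (hnonneg : ∀ i j (t : ℝ), 0 ≤ t → 0 ≤ a i j t)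
    (hmeas : ∀ i j, Measurable (a i j))
    (A : ℝ) (hA : 0 < A)
    (hbd : ∀ i j, ∀ᵐ t ∂(volume : Measure ℝ), |a i j t| ≤ A) :
    ExpConsensus a ↔ ∃ δ > (0 : ℝ), ∃ T > (0 : ℝ), JointlyConnected a δ T := by
  have h : Weights a A := ⟨hsymm, hnonneg, hmeas, hA, hbd⟩
  refine ⟨jointlyConnected_of_expConsensus hN h, ?_⟩
  rintro ⟨δ, hδ, T, hT, hJ⟩
  exact expConsensus_of_jointlyConnected (by omega) h hδ hT hJ
end

section
/- Suppose the weight functions a_ij(t) = a_ji(t) ≥ 0 are Lebesgue measurable, bounded almost everywhere by A* > 0, and the time-varying graph {G_t} is jointly (δ,T)-connected for some δ, T > 0. Then there exist constants α₁, α₂ > 0 such that for all s ≥ 0, α₁ I ≤ ∫_s^{s+T} (L(t) + (1/N)·1·1ᵀ) dt ≤ α₂ I in the positive semidefinite (Loewner) order, where 1 is the all-ones vector in ℝ^N. -/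
/-!
With `w i j = ∫ a i j` over the window `[s, s + T]`, the integrated matrix has quadratic form
`½ ∑ᵢⱼ w i j (xᵢ - xⱼ)² + (T / N) (∑ᵢ xᵢ)²` (`quadForm_eq`, `integral_entry`).

The upper bound follows from `0 ≤ w i j ≤ A T`, `(xᵢ - xⱼ)² ≤ 2 xᵢ² + 2 xⱼ²` and Cauchy-Schwarz.

For the lower bound, write `D = ∑ᵢⱼ w i j (xᵢ - xⱼ)²`. Across an edge of weight at least `δ` the
vector `x` jumps by at most `√(D / δ)`, and any two vertices are joined by a path of fewer than
`N` such edges, so `∑ᵢⱼ (xᵢ - xⱼ)² ≤ (N⁴ / δ) D` (`spectral_gap`). Since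
`2 N ‖x‖² = ∑ᵢⱼ (xᵢ - xⱼ)² + 2 (∑ᵢ xᵢ)²` (`sum_sq_sub`), this bounds `N ‖x‖²` by
`N⁴ / δ + N / T` times the quadratic form. The constants do not depend on `s`.
-/


open MeasureTheory Finset Matrix

/-- The all-ones `N × N` matrix `1·1ᵀ`. -/
def onesM (N : ℕ) : Matrix (Fin N) (Fin N) ℝ := Matrix.of fun _ _ => (1 : ℝ)

/-- The quadratic form of the matrix `L(w) + c·1·1ᵀ`, where `L(w)` is the Laplacian of the
weights `w`. -/
lemma quadForm_eq {N : ℕ} (w : Fin N → Fin N → ℝ) (hw : ∀ i j, w i j = w j i) (c : ℝ)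
    (x : Fin N → ℝ) :
    ∑ i, ∑ j, x i * (((if i = j then ∑ k ∈ univ.erase i, w i k else -(w i j)) + c) * x j) =
      (1 / 2) * ∑ i, ∑ j, w i j * (x i - x j) ^ 2 + c * (∑ i, x i) ^ 2 := by
  have h1 : ∀ i j, (if i = j then ∑ k ∈ univ.erase i, w i k else -(w i j)) =
      (if i = j then ∑ k, w i k else 0) - w i j := by
    intro i j
    split_ifs with h
    · subst h
      rw [← Finset.add_sum_erase univ (fun k => w i k) (mem_univ i)]
      ring
    · ring
  have h2 : ∑ i, ∑ j, w i j * x j ^ 2 = ∑ i, ∑ j, w i j * x i ^ 2 := by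
    rw [Finset.sum_comm]
    exact sum_congr rfl fun i _ => sum_congr rfl fun j _ => by rw [hw]
  have h3 : ∑ i, ∑ j, w i j * (x i - x j) ^ 2 =
      2 * ∑ i, ∑ j, w i j * x i ^ 2 - 2 * ∑ i, ∑ j, w i j * (x i * x j) := by
    have : ∑ i, ∑ j, w i j * (x i - x j) ^ 2 = ∑ i, ∑ j, w i j * x i ^ 2 +
        ∑ i, ∑ j, w i j * x j ^ 2 - 2 * ∑ i, ∑ j, w i j * (x i * x j) := by
      simp only [Finset.mul_sum, ← Finset.sum_add_distrib, ← Finset.sum_sub_distrib]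
      exact sum_congr rfl fun i _ => sum_congr rfl fun j _ => by ring
    rw [this, h2]; ring
  have h4 : ∑ i, ∑ j, w i j * x i ^ 2 =
      ∑ i, ∑ j, x i * ((if i = j then ∑ k, w i k else 0) * x j) := by
    refine sum_congr rfl fun i _ => ?_
    rw [← Finset.sum_mul]
    simp
    ring
  rw [h3, h4, sq (∑ i, x i), Finset.sum_mul_sum]
  simp only [h1, Finset.mul_sum, ← Finset.sum_add_distrib, ← Finset.sum_sub_distrib]
  exact sum_congr rfl fun i _ => sum_congr rfl fun j _ => by ring

/-- A function that varies by at most `r` along each edge varies by at most `r` times the length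
along a walk. -/
lemma abs_sub_le_of_walk {V : Type*} {G : SimpleGraph V} (x : V → ℝ) (r : ℝ)
    (h : ∀ u v, G.Adj u v → |x u - x v| ≤ r) {u v : V} (p : G.Walk u v) :
    |x u - x v| ≤ p.length * r := by
  induction p with
  | nil => simp
  | cons hadj p ih =>
    rw [SimpleGraph.Walk.length_cons]
    push_cast
    have h1 := h _ _ hadj
    have h2 := abs_sub_le (x _) (x _) (x _) |>.trans (add_le_add h1 ih)
    linarith

/-- The identity `∑ᵢⱼ (xᵢ - xⱼ)² = 2N‖x‖² - 2(∑ᵢ xᵢ)²`. -/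
lemma sum_sq_sub {N : ℕ} (x : Fin N → ℝ) :
    ∑ i, ∑ j, (x i - x j) ^ 2 = 2 * N * ∑ i, x i ^ 2 - 2 * (∑ i, x i) ^ 2 := by
  have e : ∀ i j, (x i - x j) ^ 2 = x i ^ 2 + x j ^ 2 - 2 * (x i * x j) := fun i j => by ring
  simp only [e, Finset.sum_add_distrib, Finset.sum_sub_distrib, ← Finset.mul_sum,
    ← Finset.sum_mul, sum_const, card_univ, Fintype.card_fin, nsmul_eq_mul]
  ring

/-- The spectral gap of a connected weighted graph, with a constant depending only on the number
of vertices and on a lower bound `δ` for the weights of the connecting edges. -/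
lemma spectral_gap {N : ℕ} (w : Fin N → Fin N → ℝ) (hw : ∀ i j, w i j = w j i)
    (h0 : ∀ i j, 0 ≤ w i j) {δ : ℝ} (hδ : 0 < δ)
    (hc : (SimpleGraph.fromRel fun i j : Fin N => δ ≤ w i j).Connected) (x : Fin N → ℝ) :
    ∑ i, ∑ j, (x i - x j) ^ 2 ≤ N ^ 4 / δ * ∑ i, ∑ j, w i j * (x i - x j) ^ 2 := by
  set D := ∑ i, ∑ j, w i j * (x i - x j) ^ 2 with hD
  have hterm : ∀ i j, 0 ≤ w i j * (x i - x j) ^ 2 := fun i j => mul_nonneg (h0 i j) (sq_nonneg _)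
  have hD0 : 0 ≤ D := sum_nonneg fun i _ => sum_nonneg fun j _ => hterm i j
  have hedge : ∀ u v, (SimpleGraph.fromRel fun i j : Fin N => δ ≤ w i j).Adj u v →
      |x u - x v| ≤ √(D / δ) := by
    intro u v huv
    have hδw : δ ≤ w u v := by
      rcases (SimpleGraph.fromRel_adj _ _ _).1 huv with ⟨-, h | h⟩
      · exact h
      · rwa [hw u v]
    apply Real.abs_le_sqrt
    rw [le_div_iff₀ hδ]
    calc (x u - x v) ^ 2 * δ ≤ w u v * (x u - x v) ^ 2 := by
          rw [mul_comm]; exact mul_le_mul_of_nonneg_right hδw (sq_nonneg _)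
      _ ≤ ∑ j, w u j * (x u - x j) ^ 2 :=
          single_le_sum (f := fun j => w u j * (x u - x j) ^ 2) (fun j _ => hterm u j) (mem_univ v)
      _ ≤ D := single_le_sum (f := fun i => ∑ j, w i j * (x i - x j) ^ 2)
          (fun i _ => sum_nonneg fun j _ => hterm i j) (mem_univ u)
  have hpair : ∀ i j, (x i - x j) ^ 2 ≤ N ^ 2 * (D / δ) := by
    intro i j
    obtain ⟨p, hp⟩ := (hc.preconnected i j).exists_isPath
    have hlen : (p.length : ℝ) ≤ N := by
      have := hp.length_lt
      rw [Fintype.card_fin] at this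
      exact_mod_cast this.le
    have h1 : |x i - x j| ≤ N * √(D / δ) :=
      (abs_sub_le_of_walk x _ hedge p).trans
        (mul_le_mul_of_nonneg_right hlen (Real.sqrt_nonneg _))
    calc (x i - x j) ^ 2 = |x i - x j| ^ 2 := (sq_abs _).symm
      _ ≤ (N * √(D / δ)) ^ 2 := pow_le_pow_left₀ (abs_nonneg _) h1 2
      _ = N ^ 2 * (D / δ) := by rw [mul_pow, Real.sq_sqrt (div_nonneg hD0 hδ.le)]
  calc ∑ i, ∑ j, (x i - x j) ^ 2 ≤ ∑ _i : Fin N, ∑ _j : Fin N, (N : ℝ) ^ 2 * (D / δ) :=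
        sum_le_sum fun i _ => sum_le_sum fun j _ => hpair i j
    _ = N ^ 4 / δ * D := by
        simp only [sum_const, card_univ, Fintype.card_fin, nsmul_eq_mul]
        ring

/-- The entries of the time integral of `L(t) + (1/N)·1·1ᵀ`. -/
lemma integral_entry {N : ℕ} (a : Fin N → Fin N → ℝ → ℝ) (s T : ℝ)
    (hint : ∀ i j, IntervalIntegrable (a i j) volume s (s + T)) (i j : Fin N) :
    ∫ t in s..s + T, (lap a t + (N : ℝ)⁻¹ • onesM N) i j =
      (if i = j then ∑ k ∈ univ.erase i, ∫ t in s..s + T, a i k t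
        else -(∫ t in s..s + T, a i j t)) + T * (N : ℝ)⁻¹ := by
  simp only [lap, onesM, Matrix.add_apply, Matrix.smul_apply, Matrix.of_apply, smul_eq_mul,
    mul_one]
  split_ifs with h
  · rw [intervalIntegral.integral_add _ intervalIntegrable_const,
      intervalIntegral.integral_finsetSum fun k _ => hint i k]
    · simp
    · simpa only [Finset.sum_fn] using
        IntervalIntegrable.sum (univ.erase i) (f := fun k => a i k) fun k _ => hint i k
  · rw [intervalIntegral.integral_add (f := fun t => -(a i j t)) (hint i j).neg
      intervalIntegrable_const,
      intervalIntegral.integral_neg]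
    simp

/-- **Uniform observability bound.** If the weights are symmetric, nonnegative,
measurable, a.e. bounded, and the time-varying graph is jointly `(δ,T)`-connected,
then there are `α₁, α₂ > 0` with
`α₁ I ≤ ∫_s^{s+T} (L(t) + (1/N)·1·1ᵀ) dt ≤ α₂ I` (Loewner order) for all `s ≥ 0`. -/
theorem jointly_connected_integral_laplacian_bounds
    {N : ℕ} (hN : 2 ≤ N) (a : Fin N → Fin N → ℝ → ℝ)
    (hsymm : ∀ i j t, a i j t = a j i t)
    (hnonneg : ∀ i j (t : ℝ), 0 ≤ t → 0 ≤ a i j t)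
    (hmeas : ∀ i j, Measurable (a i j))
    (A : ℝ) (hA : 0 < A)
    (hbd : ∀ i j, ∀ᵐ t ∂(volume : Measure ℝ), |a i j t| ≤ A)
    (δ T : ℝ) (hδ : 0 < δ) (hT : 0 < T)
    (hconn : JointlyConnected a δ T) :
    ∃ α₁ > (0 : ℝ), ∃ α₂ > (0 : ℝ), ∀ s : ℝ, 0 ≤ s →
      ((Matrix.of fun i j =>
          ∫ t in s..s + T, (lap a t + (N : ℝ)⁻¹ • onesM N) i j) -
        α₁ • (1 : Matrix (Fin N) (Fin N) ℝ)).PosSemidef ∧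
      (α₂ • (1 : Matrix (Fin N) (Fin N) ℝ) -
        Matrix.of fun i j =>
          ∫ t in s..s + T, (lap a t + (N : ℝ)⁻¹ • onesM N) i j).PosSemidef := by
  have hN0 : (0 : ℝ) < N := by exact_mod_cast (by omega : 0 < N)
  have hC : 0 < (N : ℝ) ^ 4 / δ + N / T := by positivity
  refine ⟨N / (N ^ 4 / δ + N / T), by positivity, 2 * A * T * N + T, by positivity, ?_⟩
  intro s hs
  have hint : ∀ i j, IntervalIntegrable (a i j) volume s (s + T) := fun i j =>
    (intervalIntegrable_const (c := A)).mono_fun' (hmeas i j).aestronglyMeasurable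
      (ae_restrict_of_ae (hbd i j))
  set w : Fin N → Fin N → ℝ := fun i j => ∫ t in s..s + T, a i j t with hwdef
  have hw : ∀ i j, w i j = w j i := fun i j => by simp only [hwdef, hsymm i j]
  have h0 : ∀ i j, 0 ≤ w i j := fun i j =>
    intervalIntegral.integral_nonneg (by linarith) fun t ht => hnonneg i j t (hs.trans ht.1)
  have hwA : ∀ i j, w i j ≤ A * T := by
    intro i j
    have h := intervalIntegral.integral_mono_ae (by linarith : s ≤ s + T) (hint i j)
      (intervalIntegrable_const (c := A)) ((hbd i j).mono fun t ht => (abs_le.1 ht).2)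
    simpa [mul_comm] using h
  have hM : (Matrix.of fun i j => ∫ t in s..s + T, (lap a t + (N : ℝ)⁻¹ • onesM N) i j) =
      Matrix.of fun i j =>
        (if i = j then ∑ k ∈ univ.erase i, w i k else -(w i j)) + T * (N : ℝ)⁻¹ := by
    ext i j
    exact integral_entry a s T hint i j
  rw [hM]
  set M : Matrix (Fin N) (Fin N) ℝ := Matrix.of fun i j =>
    (if i = j then ∑ k ∈ univ.erase i, w i k else -(w i j)) + T * (N : ℝ)⁻¹ with hMdef
  have hherm : M.IsHermitian := by
    ext i j
    simp only [hMdef, Matrix.conjTranspose_apply, Matrix.of_apply, star_trivial]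
    by_cases h : i = j
    · subst h; rfl
    · rw [if_neg h, if_neg (Ne.symm h), hw]
  have hone : ∀ c : ℝ, (c • (1 : Matrix (Fin N) (Fin N) ℝ)).IsHermitian := fun c => by
    simp [Matrix.IsHermitian]
  have hquad : ∀ x : Fin N → ℝ, x ⬝ᵥ (M *ᵥ x) =
      (1 / 2) * ∑ i, ∑ j, w i j * (x i - x j) ^ 2 + T * (N : ℝ)⁻¹ * (∑ i, x i) ^ 2 := by
    intro x
    rw [← quadForm_eq w hw]
    simp only [dotProduct, mulVec, hMdef, Matrix.of_apply, Finset.mul_sum]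
  have hnorm : ∀ (c : ℝ) (x : Fin N → ℝ),
      x ⬝ᵥ ((c • (1 : Matrix (Fin N) (Fin N) ℝ)) *ᵥ x) = c * ∑ i, x i ^ 2 := by
    intro c x
    rw [Matrix.smul_mulVec, Matrix.one_mulVec, dotProduct_smul, smul_eq_mul]
    simp only [dotProduct, sq]
  constructor
  · refine Matrix.PosSemidef.of_dotProduct_mulVec_nonneg (hherm.sub (hone _)) fun x => ?_
    rw [star_trivial, Matrix.sub_mulVec, dotProduct_sub, hquad, hnorm, sub_nonneg,
      div_mul_eq_mul_div, div_le_iff₀ hC]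
    have h1 := spectral_gap w hw h0 hδ (hconn s hs) x
    rw [sum_sq_sub] at h1
    have hD0 : 0 ≤ ∑ i, ∑ j, w i j * (x i - x j) ^ 2 :=
      sum_nonneg fun i _ => sum_nonneg fun j _ => mul_nonneg (h0 i j) (sq_nonneg _)
    generalize (∑ i, ∑ j, w i j * (x i - x j) ^ 2) = D at h1 hD0 ⊢
    have hS : 0 ≤ (∑ i, x i) ^ 2 := sq_nonneg _
    generalize (∑ i, x i) ^ 2 = S at h1 hS ⊢
    have h2 : (1 / 2 * D + T * (N : ℝ)⁻¹ * S) * (N ^ 4 / δ + N / T) =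
        1 / 2 * (N ^ 4 / δ * D) + S + (1 / 2 * D * (N / T) + T * (N : ℝ)⁻¹ * S * (N ^ 4 / δ)) := by
      field_simp
      ring
    have h3 : 0 ≤ 1 / 2 * D * (N / T) + T * (N : ℝ)⁻¹ * S * (N ^ 4 / δ) := by positivity
    rw [h2]
    linarith
  · refine Matrix.PosSemidef.of_dotProduct_mulVec_nonneg ((hone _).sub hherm) fun x => ?_
    rw [star_trivial, Matrix.sub_mulVec, dotProduct_sub, hquad, hnorm, sub_nonneg]
    have hD : ∑ i, ∑ j, w i j * (x i - x j) ^ 2 ≤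
        ∑ i, ∑ j, A * T * (2 * x i ^ 2 + 2 * x j ^ 2) := by
      refine sum_le_sum fun i _ => sum_le_sum fun j _ => ?_
      exact mul_le_mul (hwA i j) (by nlinarith [sq_nonneg (x i + x j)]) (sq_nonneg _)
        (by positivity)
    have hD' : ∑ i, ∑ j, A * T * (2 * x i ^ 2 + 2 * x j ^ 2) =
        4 * A * T * N * ∑ i, x i ^ 2 := by
      simp only [← Finset.mul_sum, Finset.sum_add_distrib, sum_const, card_univ,
        Fintype.card_fin, nsmul_eq_mul]
      ring
    have hS : (∑ i, x i) ^ 2 ≤ N * ∑ i, x i ^ 2 := by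
      simpa using sq_sum_le_card_mul_sum_sq (s := (univ : Finset (Fin N))) (f := x)
    have hS' : T * (N : ℝ)⁻¹ * (∑ i, x i) ^ 2 ≤ T * ∑ i, x i ^ 2 := by
      calc T * (N : ℝ)⁻¹ * (∑ i, x i) ^ 2 ≤ T * (N : ℝ)⁻¹ * (N * ∑ i, x i ^ 2) :=
            mul_le_mul_of_nonneg_left hS (by positivity)
        _ = T * ∑ i, x i ^ 2 := by field_simp
    rw [hD'] at hD
    linarith
end

section
/- For every integer N ≥ 2 and every α₁ > 0 there exists δ > 0, depending only on N and α₁, with the following property: for every symmetric matrix W ∈ ℝ^{N×N} with nonnegative entries, if the weighted Laplacian L_W satisfies xᵀ L_W x ≥ α₁‖x‖² for every x ∈ ℝ^N with 1ᵀx = 0, then the graph on vertex set {1,…,N} whose edges are the pairs {i,j} (i ≠ j) with W_ij ≥ δ is connected. -/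
/-!
The admissible constant is `δ = α₁ / N`. For `∑ i, x i = 0` one has
`∑ i, ∑ j, (x i - x j)² = 2 N ∑ i, (x i)²`, while `xᵀ L_W x = ½ ∑ i, ∑ j, W i j (x i - x j)²`
(`lapW_quadForm`). If the threshold graph were disconnected, let `x` be the centred indicator of
the connected component of some vertex. Every pair with `x i ≠ x j` is a non-edge, hence has weight
less than `δ`, and at least one such pair exists. So
`xᵀ L_W x < δ / 2 * ∑ i, ∑ j, (x i - x j)² = α₁ ∑ i, (x i)²`, against the spectral gap hypothesis.
-/

open Finset Matrix

/-- The weighted Laplacian of the symmetric weight matrix `W`: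
`(L_W)_{ij} = -W_{ij}` for `i ≠ j` and `(L_W)_{ii} = ∑_{j≠i} W_{ij}`. -/
noncomputable def lapW {N : ℕ} (W : Matrix (Fin N) (Fin N) ℝ) :
    Matrix (Fin N) (Fin N) ℝ :=
  Matrix.of fun i j =>
    if i = j then ∑ k ∈ Finset.univ.erase i, W i k else -(W i j)

theorem lapW_mulVec {N : ℕ} (W : Matrix (Fin N) (Fin N) ℝ) (x : Fin N → ℝ) (i : Fin N) :
    (lapW W).mulVec x i = ∑ j, W i j * (x i - x j) := by
  have h : ∀ j, lapW W i j = (if i = j then ∑ k, W i k else 0) - W i j := by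
    intro j
    unfold lapW
    rw [Matrix.of_apply]
    split_ifs with hij
    · subst hij
      rw [← Finset.add_sum_erase _ _ (Finset.mem_univ i)]
      ring
    · ring
  simp only [Matrix.mulVec, dotProduct, h, sub_mul, ite_mul, zero_mul, mul_sub,
    Finset.sum_sub_distrib, Finset.sum_ite_eq, Finset.mem_univ, if_true, Finset.sum_mul]

theorem lapW_quadForm {N : ℕ} (W : Matrix (Fin N) (Fin N) ℝ) (hW : W.IsSymm) (x : Fin N → ℝ) :
    2 * (x ⬝ᵥ (lapW W).mulVec x) = ∑ i, ∑ j, W i j * (x i - x j) ^ 2 := by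
  have h1 : x ⬝ᵥ (lapW W).mulVec x = ∑ i, ∑ j, x i * (W i j * (x i - x j)) := by
    simp only [dotProduct, lapW_mulVec, Finset.mul_sum]
  have h2 : x ⬝ᵥ (lapW W).mulVec x = ∑ i, ∑ j, x j * (W i j * (x j - x i)) := by
    rw [h1, Finset.sum_comm]
    refine Finset.sum_congr rfl fun i _ => Finset.sum_congr rfl fun j _ => ?_
    rw [hW.apply i j]
  rw [two_mul]
  nth_rewrite 1 [h1]
  rw [h2, ← Finset.sum_add_distrib]
  refine Finset.sum_congr rfl fun i _ => ?_
  rw [← Finset.sum_add_distrib]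
  exact Finset.sum_congr rfl fun j _ => by ring

theorem sum_sum_sub_sq {N : ℕ} (x : Fin N → ℝ) (hx : ∑ i, x i = 0) :
    ∑ i, ∑ j, (x i - x j) ^ 2 = 2 * N * ∑ i, x i ^ 2 := by
  simp only [sub_sq, Finset.sum_add_distrib, Finset.sum_sub_distrib, ← Finset.mul_sum, hx,
    Finset.sum_const, Finset.card_univ, Fintype.card_fin, nsmul_eq_mul,
    mul_zero]
  ring

/-- For every `N ≥ 2` and `α₁ > 0` there is `δ > 0` (depending only on `N` and `α₁`)
such that whenever the weighted Laplacian satisfies `xᵀ L_W x ≥ α₁‖x‖²` on the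
hyperplane `1ᵀx = 0`, the edges with weight at least `δ` form a connected graph. -/
theorem uniform_spectral_gap_implies_connected :
    ∀ N : ℕ, 2 ≤ N → ∀ α₁ : ℝ, 0 < α₁ → ∃ δ > (0 : ℝ),
      ∀ W : Matrix (Fin N) (Fin N) ℝ, W.IsSymm → (∀ i j, 0 ≤ W i j) →
        (∀ x : Fin N → ℝ, (∑ i, x i) = 0 →
          α₁ * (∑ i, (x i) ^ 2) ≤ x ⬝ᵥ (lapW W).mulVec x) →
        (SimpleGraph.fromRel fun i j : Fin N => δ ≤ W i j).Connected := by
  classical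
  intro N hN α₁ hα
  have hN0 : (0 : ℝ) < N := by exact_mod_cast (by omega : 0 < N)
  refine ⟨α₁ / N, by positivity, fun W hW _ hgap => ?_⟩
  set G := SimpleGraph.fromRel fun i j : Fin N => α₁ / N ≤ W i j with hG
  have : Nonempty (Fin N) := ⟨⟨0, by omega⟩⟩
  rw [SimpleGraph.connected_iff]
  refine ⟨?_, inferInstance⟩
  intro u v
  by_contra huv
  let c : Fin N → ℝ := fun i => if G.Reachable u i then 1 else 0
  let x : Fin N → ℝ := fun i => c i - (∑ k, c k) / N
  have hx : ∑ i, x i = 0 := by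
    simp only [x, Finset.sum_sub_distrib, Finset.sum_const, Finset.card_univ, Fintype.card_fin,
      nsmul_eq_mul]
    field_simp
    ring
  have hxc : ∀ i j, x i - x j = c i - c j := fun i j => by simp only [x]; ring
  have hlt : ∀ i j, c i ≠ c j → W i j < α₁ / N := by
    intro i j hc
    by_contra! hw
    have hij : i ≠ j := fun h => hc (by rw [h])
    have hadj : G.Adj i j := by
      rw [hG, SimpleGraph.fromRel_adj]
      exact ⟨hij, Or.inl hw⟩
    have hiff : G.Reachable u i ↔ G.Reachable u j :=
      ⟨fun h => h.trans hadj.reachable, fun h => h.trans hadj.symm.reachable⟩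
    exact hc (by simp only [c, hiff])
  have hle : ∀ i j, W i j * (x i - x j) ^ 2 ≤ α₁ / N * (x i - x j) ^ 2 := by
    intro i j
    by_cases hc : c i = c j
    · simp [hxc, hc]
    · exact mul_le_mul_of_nonneg_right (hlt i j hc).le (sq_nonneg _)
  have huv' : c u - c v = 1 := by simp [c, huv]
  have hstrict : W u v * (x u - x v) ^ 2 < α₁ / N * (x u - x v) ^ 2 := by
    have := hlt u v (fun h => by rw [h] at huv'; simp at huv')
    rw [hxc, huv']
    linarith
  have hsum : ∑ i, ∑ j, W i j * (x i - x j) ^ 2 < ∑ i, ∑ j, α₁ / N * (x i - x j) ^ 2 :=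
    Finset.sum_lt_sum (fun i _ => Finset.sum_le_sum fun j _ => hle i j)
      ⟨u, Finset.mem_univ u,
        Finset.sum_lt_sum (fun j _ => hle u j) ⟨v, Finset.mem_univ v, hstrict⟩⟩
  rw [← lapW_quadForm W hW x] at hsum
  simp only [← Finset.mul_sum] at hsum
  rw [sum_sum_sub_sq x hx] at hsum
  have hcancel : α₁ / N * (2 * N * ∑ i, x i ^ 2) = 2 * (α₁ * ∑ i, x i ^ 2) := by
    field_simp
  have := hgap x hx
  linarith
end
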